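/- Let Ω ⊆ ℝ² be open, ε > 0, let v : Ω → ℂ be C³ and B : Ω → ℝ² be C², and set h' := curl B. Let T be the stress-energy tensor with components T_{ij} = (∂_i^B v, ∂_j^B v) − δ_{ij}(½|∇_B v|² + (1−|v|²)²/(4ε²) − ½(curl B)²). Then pointwise on Ω: div T = (Δ_B v + (v/ε²)(1−|v|²), ∇_B v) − h' (∇^⊥ h' + (iv, ∇_B v))^⊥, where (div T)_i := ∂₁T_{1i} + ∂₂T_{2i}. -/

import Mathlib

noncomputable section

open Complex

/-- Real inner product of two complex numbers: `(a,b) = Re a · Re b + Im a · Im b`. -/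
def rip (a b : ℂ) : ℝ := a.re * b.re + a.im * b.im

/-- `(a, X)` for `a : ℂ` and `X : ℂ²`: the vector in `ℝ²` with components `(a,X₁)`, `(a,X₂)`. -/
def ripv (a : ℂ) (X : ℂ × ℂ) : ℝ × ℝ := (rip a X.1, rip a X.2)

/-- Dot product of `X : ℂ²` with `Z : ℝ²`: `X·Z = X₁Z₁ + X₂Z₂ ∈ ℂ`. -/
def cdotR (X : ℂ × ℂ) (Z : ℝ × ℝ) : ℂ := X.1 * (Z.1 : ℂ) + X.2 * (Z.2 : ℂ)

/-- Euclidean dot product on `ℝ²`. -/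
def rdot (a b : ℝ × ℝ) : ℝ := a.1 * b.1 + a.2 * b.2

/-- Perpendicular of a vector: `Z^⊥ = (−Z₂, Z₁)`. -/
def perp (a : ℝ × ℝ) : ℝ × ℝ := (-a.2, a.1)

/-! ### Spatial differential operators for functions on `ℝ²` -/

/-- First spatial partial derivative `∂₁`. -/
def pd1 {E : Type*} [NormedAddCommGroup E] [NormedSpace ℝ E]
    (f : ℝ × ℝ → E) (x : ℝ × ℝ) : E := fderiv ℝ f x (1, 0)

/-- Second spatial partial derivative `∂₂`. -/
def pd2 {E : Type*} [NormedAddCommGroup E] [NormedSpace ℝ E]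
    (f : ℝ × ℝ → E) (x : ℝ × ℝ) : E := fderiv ℝ f x (0, 1)

/-- Gradient `∇g = (∂₁g, ∂₂g)`. -/
def sgrad (g : ℝ × ℝ → ℝ) (x : ℝ × ℝ) : ℝ × ℝ := (pd1 g x, pd2 g x)

/-- Perpendicular gradient `∇^⊥ g = (−∂₂g, ∂₁g)`. -/
def sgradPerp (g : ℝ × ℝ → ℝ) (x : ℝ × ℝ) : ℝ × ℝ := (-(pd2 g x), pd1 g x)

/-- Laplacian `Δg = ∂₁∂₁g + ∂₂∂₂g`. -/
def slap (g : ℝ × ℝ → ℝ) (x : ℝ × ℝ) : ℝ := pd1 (pd1 g) x + pd2 (pd2 g) x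

/-- Curl of a vector field: `curl X = ∂₁X₂ − ∂₂X₁`. -/
def scurl (X : ℝ × ℝ → ℝ × ℝ) (x : ℝ × ℝ) : ℝ := (pd1 X x).2 - (pd2 X x).1

/-- Divergence of a vector field: `div X = ∂₁X₁ + ∂₂X₂`. -/
def sdiv (X : ℝ × ℝ → ℝ × ℝ) (x : ℝ × ℝ) : ℝ := (pd1 X x).1 + (pd2 X x).2

/-- Covariant partial derivative `∂₁^A u = ∂₁u − iA₁u`. -/
def cpd1 (A : ℝ × ℝ → ℝ × ℝ) (u : ℝ × ℝ → ℂ) (x : ℝ × ℝ) : ℂ :=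
  pd1 u x - Complex.I * ((A x).1 : ℂ) * u x

/-- Covariant partial derivative `∂₂^A u = ∂₂u − iA₂u`. -/
def cpd2 (A : ℝ × ℝ → ℝ × ℝ) (u : ℝ × ℝ → ℂ) (x : ℝ × ℝ) : ℂ :=
  pd2 u x - Complex.I * ((A x).2 : ℂ) * u x

/-- Covariant gradient `∇_A u = ∇u − iAu`. -/
def covGrad (A : ℝ × ℝ → ℝ × ℝ) (u : ℝ × ℝ → ℂ) (x : ℝ × ℝ) : ℂ × ℂ :=
  (cpd1 A u x, cpd2 A u x)

/-- Covariant Laplacian `Δ_A u = ∂₁^A ∂₁^A u + ∂₂^A ∂₂^A u`. -/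
def covLap (A : ℝ × ℝ → ℝ × ℝ) (u : ℝ × ℝ → ℂ) (x : ℝ × ℝ) : ℂ :=
  cpd1 A (cpd1 A u) x + cpd2 A (cpd2 A u) x

/-- Vorticity `μ(u,A) = curl((iu, ∇_A u) + A)`. -/
def svort (u : ℝ × ℝ → ℂ) (A : ℝ × ℝ → ℝ × ℝ) (x : ℝ × ℝ) : ℝ :=
  scurl (fun y => ripv (Complex.I * u y) (covGrad A u y) + A y) x

/-- Ginzburg–Landau energy density
`g⁰_ε(u,A) = ½(|∇_A u|² + (1−|u|²)²/(2ε²) + (curl A)²)`. -/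
def glEnergy (ε : ℝ) (u : ℝ × ℝ → ℂ) (A : ℝ × ℝ → ℝ × ℝ) (x : ℝ × ℝ) : ℝ :=
  (1 / 2) * (Complex.normSq (cpd1 A u x) + Complex.normSq (cpd2 A u x)
    + (1 - Complex.normSq (u x)) ^ 2 / (2 * ε ^ 2) + (scurl A x) ^ 2)

/-! ### Space-time differential operators for functions on `ℝ² × ℝ`
(spatial operators act in the spatial variables, `tdt` is the time derivative) -/

/-- First spatial partial derivative `∂₁`. -/
def sp1 {E : Type*} [NormedAddCommGroup E] [NormedSpace ℝ E]
    (f : (ℝ × ℝ) × ℝ → E) (z : (ℝ × ℝ) × ℝ) : E := fderiv ℝ f z ((1, 0), 0)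

/-- Second spatial partial derivative `∂₂`. -/
def sp2 {E : Type*} [NormedAddCommGroup E] [NormedSpace ℝ E]
    (f : (ℝ × ℝ) × ℝ → E) (z : (ℝ × ℝ) × ℝ) : E := fderiv ℝ f z ((0, 1), 0)

/-- Time derivative `∂_t`. -/
def tdt {E : Type*} [NormedAddCommGroup E] [NormedSpace ℝ E]
    (f : (ℝ × ℝ) × ℝ → E) (z : (ℝ × ℝ) × ℝ) : E := fderiv ℝ f z ((0, 0), 1)

/-- Spatial gradient. -/
def tgrad (g : (ℝ × ℝ) × ℝ → ℝ) (z : (ℝ × ℝ) × ℝ) : ℝ × ℝ := (sp1 g z, sp2 g z)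

/-- Spatial perpendicular gradient `∇^⊥ g = (−∂₂g, ∂₁g)`. -/
def tgradPerp (g : (ℝ × ℝ) × ℝ → ℝ) (z : (ℝ × ℝ) × ℝ) : ℝ × ℝ := (-(sp2 g z), sp1 g z)

/-- Spatial Laplacian. -/
def tlap (g : (ℝ × ℝ) × ℝ → ℝ) (z : (ℝ × ℝ) × ℝ) : ℝ := sp1 (sp1 g) z + sp2 (sp2 g) z

/-- Spatial curl of a time-dependent vector field. -/
def tcurl (X : (ℝ × ℝ) × ℝ → ℝ × ℝ) (z : (ℝ × ℝ) × ℝ) : ℝ := (sp1 X z).2 - (sp2 X z).1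

/-- Spatial divergence of a time-dependent vector field. -/
def tdiv (X : (ℝ × ℝ) × ℝ → ℝ × ℝ) (z : (ℝ × ℝ) × ℝ) : ℝ := (sp1 X z).1 + (sp2 X z).2

/-- Covariant partial derivative `∂₁^B w = ∂₁w − iB₁w`. -/
def tcpd1 (B : (ℝ × ℝ) × ℝ → ℝ × ℝ) (w : (ℝ × ℝ) × ℝ → ℂ) (z : (ℝ × ℝ) × ℝ) : ℂ :=
  sp1 w z - Complex.I * ((B z).1 : ℂ) * w z

/-- Covariant partial derivative `∂₂^B w = ∂₂w − iB₂w`. -/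
def tcpd2 (B : (ℝ × ℝ) × ℝ → ℝ × ℝ) (w : (ℝ × ℝ) × ℝ → ℂ) (z : (ℝ × ℝ) × ℝ) : ℂ :=
  sp2 w z - Complex.I * ((B z).2 : ℂ) * w z

/-- Covariant gradient `∇_B w = ∇w − iBw` (spatial). -/
def tcovGrad (B : (ℝ × ℝ) × ℝ → ℝ × ℝ) (w : (ℝ × ℝ) × ℝ → ℂ) (z : (ℝ × ℝ) × ℝ) : ℂ × ℂ :=
  (tcpd1 B w z, tcpd2 B w z)

/-- Covariant Laplacian `Δ_B w`. -/
def tcovLap (B : (ℝ × ℝ) × ℝ → ℝ × ℝ) (w : (ℝ × ℝ) × ℝ → ℂ) (z : (ℝ × ℝ) × ℝ) : ℂ :=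
  tcpd1 B (tcpd1 B w) z + tcpd2 B (tcpd2 B w) z

/-- Covariant time derivative `∂_ξ w = ∂_t w + iξw`. -/
def covt (ξ : (ℝ × ℝ) × ℝ → ℝ) (w : (ℝ × ℝ) × ℝ → ℂ) (z : (ℝ × ℝ) × ℝ) : ℂ :=
  tdt w z + Complex.I * (ξ z : ℂ) * w z

/-- Vorticity `μ(w,B) = curl((iw, ∇_B w) + B)`. -/
def tvort (w : (ℝ × ℝ) × ℝ → ℂ) (B : (ℝ × ℝ) × ℝ → ℝ × ℝ) (z : (ℝ × ℝ) × ℝ) : ℝ :=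
  tcurl (fun y => ripv (Complex.I * w y) (tcovGrad B w y) + B y) z

/-- Velocity `V(w,B,ξ) = ∇(iw,∂_ξ w) − ∂_t(iw,∇_B w) − (∂_t B + ∇ξ)`. -/
def tvel (w : (ℝ × ℝ) × ℝ → ℂ) (B : (ℝ × ℝ) × ℝ → ℝ × ℝ) (ξ : (ℝ × ℝ) × ℝ → ℝ)
    (z : (ℝ × ℝ) × ℝ) : ℝ × ℝ :=
  tgrad (fun y => rip (Complex.I * w y) (covt ξ w y)) z
    - tdt (fun y => ripv (Complex.I * w y) (tcovGrad B w y)) z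
    - (tdt B z + tgrad ξ z)

/-- Time-dependent Ginzburg–Landau energy density. -/
def tglEnergy (ε : ℝ) (w : (ℝ × ℝ) × ℝ → ℂ) (B : (ℝ × ℝ) × ℝ → ℝ × ℝ)
    (z : (ℝ × ℝ) × ℝ) : ℝ :=
  (1 / 2) * (Complex.normSq (tcpd1 B w z) + Complex.normSq (tcpd2 B w z)
    + (1 - Complex.normSq (w z)) ^ 2 / (2 * ε ^ 2) + (tcurl B z) ^ 2)


theorem aux_hasFDerivAt_rip {f g : ℝ × ℝ → ℂ} {f' g' : ℝ × ℝ →L[ℝ] ℂ} {x : ℝ × ℝ}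
    (hf : HasFDerivAt f f' x) (hg : HasFDerivAt g g' x) :
    ∃ L : ℝ × ℝ →L[ℝ] ℝ, HasFDerivAt (fun y => rip (f y) (g y)) L x ∧
      ∀ e, L e = rip (f' e) (g x) + rip (f x) (g' e) := by
  have h1 := (reCLM.hasFDerivAt.comp x hf).mul (reCLM.hasFDerivAt.comp x hg)
  have h2 := (imCLM.hasFDerivAt.comp x hf).mul (imCLM.hasFDerivAt.comp x hg)
  refine ⟨_, h1.add h2, ?_⟩
  intro e
  simp [rip]
  ring

theorem aux_normSq (a : ℂ) : Complex.normSq a = rip a a := by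
  simp [Complex.normSq_apply, rip]

/-- derivative of the diagonal potential term -/
theorem aux_diag (ε : ℝ) {D f g v : ℝ × ℝ → ℂ} {h : ℝ × ℝ → ℝ} {x : ℝ × ℝ}
    (hD : DifferentiableAt ℝ D x)
    (hf : DifferentiableAt ℝ f x) (hg : DifferentiableAt ℝ g x)
    (hv : DifferentiableAt ℝ v x) (hh : DifferentiableAt ℝ h x) (e : ℝ × ℝ) :
    fderiv ℝ (fun x => rip (D x) (D x)
      - ((1 / 2) * (Complex.normSq (f x) + Complex.normSq (g x))
        + (1 - Complex.normSq (v x)) ^ 2 / (4 * ε ^ 2) - (1 / 2) * (h x) ^ 2)) x e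
    = 2 * rip (D x) (fderiv ℝ D x e) - (rip (f x) (fderiv ℝ f x e) + rip (g x) (fderiv ℝ g x e)
        - (1 - Complex.normSq (v x)) / ε ^ 2 * rip (v x) (fderiv ℝ v x e)
        - h x * fderiv ℝ h x e) := by
  simp only [aux_normSq]
  obtain ⟨LD, hLD, eD⟩ := aux_hasFDerivAt_rip hD.hasFDerivAt hD.hasFDerivAt
  obtain ⟨Lf, hLf, ef⟩ := aux_hasFDerivAt_rip hf.hasFDerivAt hf.hasFDerivAt
  obtain ⟨Lg, hLg, eg⟩ := aux_hasFDerivAt_rip hg.hasFDerivAt hg.hasFDerivAt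
  obtain ⟨Lv, hLv, ev⟩ := aux_hasFDerivAt_rip hv.hasFDerivAt hv.hasFDerivAt
  have key := hLD.sub ((((hLf.add hLg).const_mul (1/2)).add
    (((hLv.const_sub 1).pow 2).mul_const ((4 * ε ^ 2)⁻¹))).sub
      ((hh.hasFDerivAt.pow 2).const_mul (1/2)))
  have := congrArg (fun L => L e) key.fderiv
  simp only [div_eq_mul_inv (_ ^ 2) (4 * ε ^ 2)]
  refine Eq.trans this ?_
  simp [eD, ef, eg, ev]
  simp [rip]
  ring

theorem aux_cpd {w v : ℝ × ℝ → ℂ} {b : ℝ × ℝ → ℝ} {x : ℝ × ℝ}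
    (hw : DifferentiableAt ℝ w x) (hv : DifferentiableAt ℝ v x) (hb : DifferentiableAt ℝ b x) :
    DifferentiableAt ℝ (fun y => w y - Complex.I * (b y : ℂ) * v y) x ∧
    ∀ e, fderiv ℝ (fun y => w y - Complex.I * (b y : ℂ) * v y) x e
      = fderiv ℝ w x e - Complex.I * (fderiv ℝ b x e : ℂ) * v x
        - Complex.I * (b x : ℂ) * fderiv ℝ v x e := by
  have hb' := ofRealCLM.hasFDerivAt.comp x hb.hasFDerivAt
  have key := hw.hasFDerivAt.sub ((hb'.const_mul Complex.I).mul hv.hasFDerivAt)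
  refine ⟨key.differentiableAt, fun e => ?_⟩
  refine Eq.trans (congrArg (fun L => L e) key.fderiv) ?_
  simp
  ring

/-- divergence of the stress-energy tensor:
`div T = (Δ_B v + (v/ε²)(1−|v|²), ∇_B v) − h'(∇^⊥ h' + (iv, ∇_B v))^⊥`, where
`h' = curl B` and `(div T)_i = ∂₁T_{1i} + ∂₂T_{2i}`. -/
theorem stress_energy_tensor_divergence
    (Ω : Set (ℝ × ℝ)) (hΩ : IsOpen Ω) (ε : ℝ) (hε : 0 < ε)
    (v : ℝ × ℝ → ℂ) (B : ℝ × ℝ → ℝ × ℝ)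
    (hv : ContDiffOn ℝ 3 v Ω) (hB : ContDiffOn ℝ 2 B Ω)
    (T11 T12 T21 T22 : ℝ × ℝ → ℝ)
    (hT11 : T11 = fun x => rip (cpd1 B v x) (cpd1 B v x)
      - ((1 / 2) * (Complex.normSq (cpd1 B v x) + Complex.normSq (cpd2 B v x))
        + (1 - Complex.normSq (v x)) ^ 2 / (4 * ε ^ 2) - (1 / 2) * (scurl B x) ^ 2))
    (hT12 : T12 = fun x => rip (cpd1 B v x) (cpd2 B v x))
    (hT21 : T21 = fun x => rip (cpd2 B v x) (cpd1 B v x))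
    (hT22 : T22 = fun x => rip (cpd2 B v x) (cpd2 B v x)
      - ((1 / 2) * (Complex.normSq (cpd1 B v x) + Complex.normSq (cpd2 B v x))
        + (1 - Complex.normSq (v x)) ^ 2 / (4 * ε ^ 2) - (1 / 2) * (scurl B x) ^ 2)) :
    ∀ x ∈ Ω,
      (pd1 T11 x + pd2 T21 x, pd1 T12 x + pd2 T22 x)
        = ripv (covLap B v x
              + v x / (ε ^ 2 : ℂ) * (1 - (Complex.normSq (v x) : ℂ)))
            (covGrad B v x)
          - (scurl B x) • perp (sgradPerp (scurl B) x
              + ripv (Complex.I * v x) (covGrad B v x)) := by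
  intro x hx
  have hv3 : ContDiffAt ℝ 3 v x := hv.contDiffAt (hΩ.mem_nhds hx)
  have hB2 : ContDiffAt ℝ 2 B x := hB.contDiffAt (hΩ.mem_nhds hx)
  have hvd : DifferentiableAt ℝ v x := hv3.differentiableAt (by norm_num)
  have hBd : DifferentiableAt ℝ B x := hB2.differentiableAt (by norm_num)
  have hdv : DifferentiableAt ℝ (fderiv ℝ v) x :=
    (hv3.fderiv_right (m := 1) (by norm_num)).differentiableAt (by norm_num)
  have hdB : DifferentiableAt ℝ (fderiv ℝ B) x :=
    (hB2.fderiv_right (m := 1) (by norm_num)).differentiableAt (by norm_num)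
  have hsym : ∀ a b, fderiv ℝ (fderiv ℝ v) x a b = fderiv ℝ (fderiv ℝ v) x b a :=
    fun a b => (hv3.isSymmSndFDerivAt (by simp; norm_num)).eq a b
  have hpd : ∀ c : ℝ × ℝ, HasFDerivAt (fun y => fderiv ℝ v y c)
      ((ContinuousLinearMap.apply ℝ ℂ c).comp (fderiv ℝ (fderiv ℝ v) x)) x := fun c =>
    (ContinuousLinearMap.apply ℝ ℂ c).hasFDerivAt.comp x hdv.hasFDerivAt
  have hpdB : ∀ c : ℝ × ℝ, DifferentiableAt ℝ (fun y => fderiv ℝ B y c) x := fun c =>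
    ((ContinuousLinearMap.apply ℝ (ℝ × ℝ) c).hasFDerivAt.comp x hdB.hasFDerivAt).differentiableAt
  have hh : DifferentiableAt ℝ (scurl B) x := (hpdB (1, 0)).snd.sub (hpdB (0, 1)).fst
  have hb1 : ∀ e, fderiv ℝ (fun y => (B y).1) x e = (fderiv ℝ B x e).1 := fun e =>
    congrArg (fun L => L e) (hBd.hasFDerivAt.fst).fderiv
  have hb2 : ∀ e, fderiv ℝ (fun y => (B y).2) x e = (fderiv ℝ B x e).2 := fun e =>
    congrArg (fun L => L e) (hBd.hasFDerivAt.snd).fderiv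
  obtain ⟨hD1, eD1⟩ := aux_cpd (hpd (1, 0)).differentiableAt hvd hBd.fst
  obtain ⟨hD2, eD2⟩ := aux_cpd (hpd (0, 1)).differentiableAt hvd hBd.snd
  change DifferentiableAt ℝ (cpd1 B v) x at hD1
  change DifferentiableAt ℝ (cpd2 B v) x at hD2
  change ∀ e, fderiv ℝ (cpd1 B v) x e = _ at eD1
  change ∀ e, fderiv ℝ (cpd2 B v) x e = _ at eD2
  simp only [(hpd _).fderiv, hb1, ContinuousLinearMap.comp_apply,
    ContinuousLinearMap.apply_apply] at eD1
  simp only [(hpd _).fderiv, hb2, ContinuousLinearMap.comp_apply,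
    ContinuousLinearMap.apply_apply] at eD2
  have e11 := aux_diag ε hD1 hD1 hD2 hvd hh
  have e22 := aux_diag ε hD2 hD1 hD2 hvd hh
  obtain ⟨L12, h12, l12⟩ := aux_hasFDerivAt_rip hD1.hasFDerivAt hD2.hasFDerivAt
  obtain ⟨L21, h21, l21⟩ := aux_hasFDerivAt_rip hD2.hasFDerivAt hD1.hasFDerivAt
  have hs := hsym (0, 1) (1, 0)
  have hcv : v x / (ε ^ 2 : ℂ) * (1 - (Complex.normSq (v x) : ℂ))
      = (((1 - Complex.normSq (v x)) / ε ^ 2 : ℝ) : ℂ) * v x := by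
    push_cast; ring
  rw [hcv]
  -- the commutator identity
  have hcomm : fderiv ℝ (cpd1 B v) x (0, 1) - Complex.I * ((B x).2 : ℂ) * cpd1 B v x
      - (fderiv ℝ (cpd2 B v) x (1, 0) - Complex.I * ((B x).1 : ℂ) * cpd2 B v x)
      = Complex.I * (scurl B x : ℂ) * v x := by
    rw [eD1, eD2, hs]
    simp only [cpd1, cpd2, scurl, pd1, pd2]
    push_cast
    linear_combination ((B x).1 * (B x).2 * v x - (B x).2 * (B x).1 * v x) * Complex.I_sq
  have hre := congrArg Complex.re hcomm
  have him := congrArg Complex.im hcomm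
  have hc1 : cpd1 B (cpd1 B v) x
    = fderiv ℝ (cpd1 B v) x (1, 0) - Complex.I * ((B x).1 : ℂ) * cpd1 B v x := rfl
  have hc2 : cpd2 B (cpd2 B v) x
    = fderiv ℝ (cpd2 B v) x (0, 1) - Complex.I * ((B x).2 : ℂ) * cpd2 B v x := rfl
  have hv1 : fderiv ℝ v x (1, 0) = cpd1 B v x + Complex.I * ((B x).1 : ℂ) * v x := by
    simp [cpd1, pd1]
  have hv2 : fderiv ℝ v x (0, 1) = cpd2 B v x + Complex.I * ((B x).2 : ℂ) * v x := by
    simp [cpd2, pd2]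
  rw [hT11, hT12, hT21, hT22]
  simp only [pd1, pd2, e11, h12.fderiv, l12, h21.fderiv, l21, e22, hv1, hv2]
  clear e11 e22 l12 l21
  simp only [covLap, covGrad, hc1, hc2, ripv, perp, sgradPerp, pd1, pd2]
  generalize fderiv ℝ (cpd1 B v) x (1, 0) = D11 at *
  generalize fderiv ℝ (cpd1 B v) x (0, 1) = D12 at *
  generalize fderiv ℝ (cpd2 B v) x (1, 0) = D21 at *
  generalize fderiv ℝ (cpd2 B v) x (0, 1) = D22 at *
  generalize cpd1 B v x = p at *
  generalize cpd2 B v x = q at *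
  generalize (1 - Complex.normSq (v x)) / ε ^ 2 = r at *
  simp at hre him
  ext
  · simp [rip]
    linear_combination q.re * hre + q.im * him
  · simp [rip]
    linear_combination -p.re * hre - p.im * him

end
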